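/- arXiv:1307.1170 — 3 statements merged into one kernel-verified Lean document; each statement's English description precedes it below -/
import Mathlib

section
/- In a golden history, reciprocity of force carriers holds pointwise: if at time t₁ the force carrier c belongs to the force set φ_{t₁}(x, a, y) that person x directs at person y over good a, then there exists a later time t₂ > t₁ at which c belongs to the force set φ_{t₂}(y, a, x) that person y directs at person x over the same good a. (Theorem 1, the law of reciprocity for individuals.) -/
/-- A golden social state over persons `P`, goods `E`, force carriers `C`,
with maximum idle periods `θ`.  It consists of a golden power function `pow`
(whose values partition `C`), an idle function `idle` bounded by `θ`, and a
golden force function `force` with `force x a y ⊆ pow x a y`, such that any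
carrier whose idle counter has reached its maximum must be exercised. -/
structure GoldenState (P E C : Type*) (θ : C → ℕ) where
  pow : P → E → P → Set C
  idle : C → ℕ
  force : P → E → P → Set C
  pow_disjoint : ∀ x₁ a₁ y₁ x₂ a₂ y₂, (x₁, a₁, y₁) ≠ (x₂, a₂, y₂) →
    Disjoint (pow x₁ a₁ y₁) (pow x₂ a₂ y₂)
  pow_union : (⋃ x, ⋃ a, ⋃ y, pow x a y) = Set.univ
  idle_le : ∀ c, idle c ≤ θ c
  force_sub : ∀ x a y, force x a y ⊆ pow x a y
  force_of_max : ∀ c x a y, idle c = θ c → c ∈ pow x a y → c ∈ force x a y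

/-- The successor relation on golden social states: exercised carriers are
transferred to the reciprocal triple and their idle counters are reset;
unexercised carriers stay put and their idle counters increase. -/
def Successor {P E C : Type*} {θ : C → ℕ} (σ σ' : GoldenState P E C θ) : Prop :=
  (∀ x a y, σ'.pow x a y = (σ.pow x a y \ σ.force x a y) ∪ σ.force y a x) ∧
  (∀ c x a y, c ∈ σ.pow x a y →
    (c ∈ σ.force x a y → σ'.idle c = 0) ∧
    (c ∉ σ.force x a y → σ'.idle c = σ.idle c + 1))

/-- A golden history: an infinite sequence of golden social states, each a
successor of the previous one. -/
def GoldenHistory {P E C : Type*} {θ : C → ℕ} (σ : ℕ → GoldenState P E C θ) : Prop :=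
  ∀ t, Successor (σ t) (σ (t + 1))

/-! Exercising a carrier hands it over to the reciprocal triple. There it stays until it is
exercised again, and each idle step raises its idle counter by one. When the counter reaches `θ c`
exercise is forced, so the carrier is exercised back after at most `θ c` idle steps. -/

section

variable {P E C : Type*} {θ : C → ℕ} {c : C} {x y : P} {a : E}

namespace Successor

variable {σ σ' : GoldenState P E C θ}

theorem mem_pow_of_mem_force (hs : Successor σ σ') (hf : c ∈ σ.force x a y) :
    c ∈ σ'.pow y a x := by
  rw [hs.1]
  exact Or.inr hf

theorem mem_pow_of_notMem_force (hs : Successor σ σ') (hp : c ∈ σ.pow x a y)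
    (hf : c ∉ σ.force x a y) : c ∈ σ'.pow x a y := by
  rw [hs.1]
  exact Or.inl ⟨hp, hf⟩

theorem idle_eq_add_one (hs : Successor σ σ') (hp : c ∈ σ.pow x a y)
    (hf : c ∉ σ.force x a y) : σ'.idle c = σ.idle c + 1 :=
  (hs.2 c x a y hp).2 hf

end Successor

theorem GoldenHistory.exists_mem_force_of_mem_pow {σ : ℕ → GoldenState P E C θ}
    (hist : GoldenHistory σ) {t : ℕ} (hp : c ∈ (σ t).pow x a y) :
    ∃ s, t ≤ s ∧ s + (σ t).idle c ≤ t + θ c ∧ c ∈ (σ s).force x a y := by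
  induction hn : θ c - (σ t).idle c generalizing t with
  | zero =>
    have hmax : (σ t).idle c = θ c := ((σ t).idle_le c).antisymm (Nat.sub_eq_zero_iff_le.mp hn)
    exact ⟨t, le_rfl, by rw [hmax], (σ t).force_of_max c x a y hmax hp⟩
  | succ n ih =>
    by_cases hf : c ∈ (σ t).force x a y
    · exact ⟨t, le_rfl, Nat.add_le_add_left ((σ t).idle_le c) t, hf⟩
    · have hidle : (σ (t + 1)).idle c = (σ t).idle c + 1 := (hist t).idle_eq_add_one hp hf
      obtain ⟨s, hts, hsθ, hs⟩ := ih ((hist t).mem_pow_of_notMem_force hp hf) (by omega)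
      exact ⟨s, by omega, by omega, hs⟩

theorem golden_reciprocity_pointwise_general {σ : ℕ → GoldenState P E C θ}
    (hist : GoldenHistory σ) {t₁ : ℕ} (h : c ∈ (σ t₁).force x a y) :
    ∃ t₂, t₁ < t₂ ∧ t₂ ≤ t₁ + 1 + θ c ∧ c ∈ (σ t₂).force y a x := by
  obtain ⟨t₂, hlt, hle, hf⟩ :=
    hist.exists_mem_force_of_mem_pow ((hist t₁).mem_pow_of_mem_force h)
  exact ⟨t₂, hlt, le_of_add_le_left hle, hf⟩

end

/-- Theorem 1 (law of reciprocity for individuals): in a golden history, if at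
time `t₁` carrier `c` is in the force set that `x` directs at `y` over good `a`,
then at some later time `t₂ > t₁` carrier `c` is in the force set that `y`
directs at `x` over `a`. -/
theorem golden_reciprocity_pointwise
    {P E C : Type*} [Fintype P] [Nonempty P] [Fintype E] [Nonempty E]
    [Fintype C] [Nonempty C] {θ : C → ℕ} (hθ : ∀ c, 1 ≤ θ c)
    (σ : ℕ → GoldenState P E C θ) (hist : GoldenHistory σ)
    (t₁ : ℕ) (c : C) (x y : P) (a : E) (h : c ∈ (σ t₁).force x a y) :
    ∃ t₂, t₁ < t₂ ∧ c ∈ (σ t₂).force y a x := by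
  obtain ⟨t₂, hlt, -, hf⟩ := golden_reciprocity_pointwise_general hist h
  exact ⟨t₂, hlt, hf⟩
end

section
/- In a golden history, every force carrier is exercised infinitely often: for every force carrier c ∈ C and every time t ∈ ℕ, there exist a time t' ≥ t and persons x, y ∈ P and a good a ∈ E such that c ∈ φ_{t'}(x, a, y). (Key intermediate claim underlying the proof of Theorem 1: a carrier cannot remain idle forever, since its idle counter would exceed the maximum idle period θ(c).) -/
section

variable {P E C : Type*} {θ : C → ℕ} {c : C}

/-- A carrier is exercised in a golden social state when it belongs to one of the forces of that
state. The triple `(x, a, y)` is quantified away because the idle counter of a carrier depends only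
on whether it is exercised, not on who holds it. -/
def GoldenState.IsExercised (σ : GoldenState P E C θ) (c : C) : Prop :=
  ∃ x y : P, ∃ a : E, c ∈ σ.force x a y

theorem GoldenState.exists_mem_pow (σ : GoldenState P E C θ) (c : C) :
    ∃ x a y, c ∈ σ.pow x a y := by
  have hc : c ∈ ⋃ x, ⋃ a, ⋃ y, σ.pow x a y := σ.pow_union ▸ Set.mem_univ c
  simpa only [Set.mem_iUnion] using hc

theorem GoldenState.isExercised_of_idle_eq {σ : GoldenState P E C θ} (hc : σ.idle c = θ c) :
    σ.IsExercised c :=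
  let ⟨x, a, y, hxy⟩ := σ.exists_mem_pow c
  ⟨x, y, a, σ.force_of_max c x a y hc hxy⟩

theorem Successor.idle_eq_add_one_s3 {σ σ' : GoldenState P E C θ} (h : Successor σ σ')
    (hc : ¬ σ.IsExercised c) : σ'.idle c = σ.idle c + 1 :=
  let ⟨x, a, y, hxy⟩ := σ.exists_mem_pow c
  (h.2 c x a y hxy).2 fun hforce => hc ⟨x, y, a, hforce⟩

theorem GoldenHistory.idle_add {σ : ℕ → GoldenState P E C θ} (hist : GoldenHistory σ) {t n : ℕ}
    (hc : ∀ k < n, ¬ (σ (t + k)).IsExercised c) :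
    (σ (t + n)).idle c = (σ t).idle c + n := by
  induction n with
  | zero => rfl
  | succ n ih =>
    calc (σ (t + n + 1)).idle c
        = (σ (t + n)).idle c + 1 := (hist (t + n)).idle_eq_add_one_s3 (hc n n.lt_succ_self)
      _ = (σ t).idle c + n + 1 := by rw [ih fun k hk => hc k (hk.trans n.lt_succ_self)]

end

theorem golden_carrier_exercised_infinitely_often_general
    {P E C : Type*} {θ : C → ℕ} (σ : ℕ → GoldenState P E C θ) (hist : GoldenHistory σ)
    (c : C) (t : ℕ) :
    ∃ t', t ≤ t' ∧ t' + (σ t).idle c ≤ t + θ c ∧ (σ t').IsExercised c := by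
  obtain ⟨n, hn⟩ : ∃ n, θ c = (σ t).idle c + n := Nat.exists_eq_add_of_le ((σ t).idle_le c)
  by_contra! h
  have not_exercised : ∀ k ≤ n, ¬ (σ (t + k)).IsExercised c := fun k hk =>
    h (t + k) (Nat.le_add_right t k) (by omega)
  have idle_eq : (σ (t + n)).idle c = θ c :=
    (hist.idle_add fun k hk => not_exercised k hk.le).trans hn.symm
  exact not_exercised n le_rfl (GoldenState.isExercised_of_idle_eq idle_eq)

/-- In a golden history, every force carrier is exercised infinitely often:
for every carrier `c` and time `t` there are `t' ≥ t`, persons `x, y`, and a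
good `a` with `c ∈ φ_{t'}(x, a, y)`. -/
theorem golden_carrier_exercised_infinitely_often
    {P E C : Type*} [Fintype P] [Nonempty P] [Fintype E] [Nonempty E]
    [Fintype C] [Nonempty C] {θ : C → ℕ} (hθ : ∀ c, 1 ≤ θ c)
    (σ : ℕ → GoldenState P E C θ) (hist : GoldenHistory σ)
    (c : C) (t : ℕ) :
    ∃ t', t ≤ t' ∧ ∃ x y : P, ∃ a : E, c ∈ (σ t').force x a y :=
  let ⟨t', ht, _, hc⟩ := golden_carrier_exercised_infinitely_often_general σ hist c t
  ⟨t', ht, hc⟩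
end

section
/- The successor law preserves the partition property of the golden power function: if π : P × E × P → Set C is a golden power function (its values are pairwise disjoint for distinct triples and their union is all of C) and φ : P × E × P → Set C satisfies φ(x, a, y) ⊆ π(x, a, y) for all x, y ∈ P and a ∈ E, then the function π' defined by π'(x, a, y) = (π(x, a, y) \ φ(x, a, y)) ∪ φ(y, a, x) is again a golden power function, i.e., its values are pairwise disjoint for distinct triples and their union over all triples equals C. (Implicit well-definedness claim needed for the successor relation of golden social states.) -/
/-!
Exchanging the persons in a triple is a permutation `σ` of the triples. Each carrier that is not
transferred stays in its own cell `i`, and each transferred carrier moves from its cell `σ i` to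
the cell `i`. Hence, for triples as for any index type, injectivity of `σ` keeps the cells disjoint
and surjectivity of `σ` ensures that no carrier is lost.
-/

section Transfer

open scoped Function

variable {ι α : Type*} {σ : ι → ι} {f g : ι → α}

/-- The family obtained from `f` by moving parts of its members, as in the successor law: the part
`g i` is removed from the `i`-th member, and the part `g (σ i)` is added to it. The index map
thus points from the receiving member to the giving one. -/
def transfer [Max α] [SDiff α] (σ : ι → ι) (f g : ι → α) (i : ι) : α :=
  f i \ g i ⊔ g (σ i)

theorem disjoint_sdiff_of_pairwise_disjoint_of_le [GeneralizedBooleanAlgebra α]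
    (hf : Pairwise (Disjoint on f)) (hgf : g ≤ f) (i j : ι) : Disjoint (f i \ g i) (g j) := by
  obtain rfl | hij := eq_or_ne i j
  · exact disjoint_sdiff_self_left
  · exact (hf hij).mono sdiff_le (hgf j)

theorem pairwise_disjoint_transfer [GeneralizedBooleanAlgebra α]
    (hf : Pairwise (Disjoint on f)) (hgf : g ≤ f) (hσ : σ.Injective) :
    Pairwise (Disjoint on transfer σ f g) := by
  intro i j hij
  have kept_kept : Disjoint (f i \ g i) (f j \ g j) := (hf hij).mono sdiff_le sdiff_le
  have kept_moved : ∀ k l, Disjoint (f k \ g k) (g l) :=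
    disjoint_sdiff_of_pairwise_disjoint_of_le hf hgf
  have moved_moved : Disjoint (g (σ i)) (g (σ j)) := (hf (hσ.ne hij)).mono (hgf _) (hgf _)
  exact disjoint_sup_left.mpr
    ⟨disjoint_sup_right.mpr ⟨kept_kept, kept_moved i (σ j)⟩,
      disjoint_sup_right.mpr ⟨(kept_moved j (σ i)).symm, moved_moved⟩⟩

theorem iSup_transfer [Order.Coframe α] (hgf : g ≤ f) (hσ : σ.Surjective) :
    ⨆ i, transfer σ f g i = ⨆ i, f i :=
  calc
    ⨆ i, transfer σ f g i = (⨆ i, f i \ g i) ⊔ ⨆ i, g (σ i) := iSup_sup_eq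
    _ = (⨆ i, f i \ g i) ⊔ ⨆ i, g i := by rw [hσ.iSup_comp]
    _ = ⨆ i, f i \ g i ⊔ g i := iSup_sup_eq.symm
    _ = ⨆ i, f i := iSup_congr fun i => sdiff_sup_cancel (hgf i)

end Transfer

/-- The exchange of wisher and recipient in a triple `(x, a, y)`, which relates the cell of `π'`
receiving a transferred carrier to the cell of `π` giving it. -/
def swapPersons {P E : Type*} (t : P × E × P) : P × E × P :=
  (t.2.2, t.2.1, t.1)

theorem swapPersons_involutive {P E : Type*} :
    Function.Involutive (swapPersons : P × E × P → P × E × P) :=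
  fun _ => rfl

theorem iUnion_uncurry {ι κ μ α : Type*} (s : ι → κ → μ → Set α) :
    ⋃ t, (↿s) t = ⋃ i, ⋃ j, ⋃ k, s i j k := by
  simp only [Set.iUnion_prod', Function.HasUncurry.uncurry, id]

theorem successor_preserves_partition_general {P E C : Type*}
    (π φ : P → E → P → Set C)
    (hdisj : ∀ x₁ a₁ y₁ x₂ a₂ y₂, (x₁, a₁, y₁) ≠ (x₂, a₂, y₂) →
      Disjoint (π x₁ a₁ y₁) (π x₂ a₂ y₂))
    (hunion : (⋃ x, ⋃ a, ⋃ y, π x a y) = Set.univ)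
    (hsub : ∀ x a y, φ x a y ⊆ π x a y) :
    (∀ x₁ a₁ y₁ x₂ a₂ y₂, (x₁, a₁, y₁) ≠ (x₂, a₂, y₂) →
      Disjoint ((π x₁ a₁ y₁ \ φ x₁ a₁ y₁) ∪ φ y₁ a₁ x₁)
               ((π x₂ a₂ y₂ \ φ x₂ a₂ y₂) ∪ φ y₂ a₂ x₂)) ∧
    (⋃ x, ⋃ a, ⋃ y, ((π x a y \ φ x a y) ∪ φ y a x)) = Set.univ := by
  have hdisj_uncurry : Pairwise (Function.onFun Disjoint ↿π) := fun _ _ => hdisj _ _ _ _ _ _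
  have hsub_uncurry : ↿φ ≤ ↿π := fun _ => hsub _ _ _
  constructor
  · intro x₁ a₁ y₁ x₂ a₂ y₂ hne
    exact pairwise_disjoint_transfer hdisj_uncurry hsub_uncurry swapPersons_involutive.injective hne
  · calc
      ⋃ x, ⋃ a, ⋃ y, ((π x a y \ φ x a y) ∪ φ y a x)
          = ⋃ t, transfer swapPersons ↿π ↿φ t := (iUnion_uncurry _).symm
      _ = ⋃ t, (↿π) t := iSup_transfer hsub_uncurry swapPersons_involutive.surjective
      _ = ⋃ x, ⋃ a, ⋃ y, π x a y := iUnion_uncurry π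
      _ = Set.univ := hunion

/-- The successor law preserves the partition property of the golden power
function: if the values of `π` are pairwise disjoint with union all of `C`,
and `φ x a y ⊆ π x a y` everywhere, then the values of
`π' x a y = (π x a y \ φ x a y) ∪ φ y a x` are again pairwise disjoint with
union all of `C`. -/
theorem successor_preserves_partition
    {P E C : Type*} [Fintype P] [Nonempty P] [Fintype E] [Nonempty E]
    [Fintype C] [Nonempty C]
    (π φ : P → E → P → Set C)
    (hdisj : ∀ x₁ a₁ y₁ x₂ a₂ y₂, (x₁, a₁, y₁) ≠ (x₂, a₂, y₂) →
      Disjoint (π x₁ a₁ y₁) (π x₂ a₂ y₂))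
    (hunion : (⋃ x, ⋃ a, ⋃ y, π x a y) = Set.univ)
    (hsub : ∀ x a y, φ x a y ⊆ π x a y) :
    (∀ x₁ a₁ y₁ x₂ a₂ y₂, (x₁, a₁, y₁) ≠ (x₂, a₂, y₂) →
      Disjoint ((π x₁ a₁ y₁ \ φ x₁ a₁ y₁) ∪ φ y₁ a₁ x₁)
               ((π x₂ a₂ y₂ \ φ x₂ a₂ y₂) ∪ φ y₂ a₂ x₂)) ∧
    (⋃ x, ⋃ a, ⋃ y, ((π x a y \ φ x a y) ∪ φ y a x)) = Set.univ :=
  successor_preserves_partition_general π φ hdisj hunion hsub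
end
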